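/- arXiv:2211.16402 — 4 statements merged into one kernel-verified Lean document; each statement's English description precedes it below -/
import Mathlib

section
/- Let l ≥ 1, k = 2^l, N = kl, and let ED be the element distinctness function on the balanced slice of {0,1}^{N}: ED(x₁, …, x_k) = 1 if and only if the blocks x₁, …, x_k ∈ {0,1}^l are pairwise distinct. Then D(ED) ≥ log₂(k!/2); in particular D(ED) ≥ N − O(N/log N). -/
/-- A deterministic decision tree querying variables indexed by `ι`. -/
inductive DTree (ι : Type) : Type where
  | leaf : Bool → DTree ι
  | node : ι → DTree ι → DTree ι → DTree ι

namespace DTree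

/-- Evaluation of a decision tree on an input `x : ι → Bool`. -/
def eval {ι : Type} : DTree ι → (ι → Bool) → Bool
  | .leaf b, _ => b
  | .node i t0 t1, x => if x i then eval t1 x else eval t0 x

/-- The number of queries made by a decision tree on an input. -/
def cost {ι : Type} : DTree ι → (ι → Bool) → ℕ
  | .leaf _, _ => 0
  | .node i t0 t1, x => 1 + (if x i then cost t1 x else cost t0 x)

end DTree

/-- `T` computes `f` on the domain `S`. -/
def Computes {ι : Type} (T : DTree ι) (S : Set (ι → Bool)) (f : (ι → Bool) → Bool) : Prop :=
  ∀ x ∈ S, T.eval x = f x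

/-- Deterministic query complexity of `f` on the domain `S`: the least `d` such that some
decision tree computes `f` on `S` making at most `d` queries on every input in `S`. -/
noncomputable def Dquery {ι : Type} (S : Set (ι → Bool)) (f : (ι → Bool) → Bool) : ℕ :=
  sInf {d | ∃ T : DTree ι, Computes T S f ∧ ∀ x ∈ S, T.cost x ≤ d}

/-- Hamming weight of `x : ι → Bool`. -/
def hamWeight {ι : Type} [Fintype ι] (x : ι → Bool) : ℕ :=
  (Finset.univ.filter fun i => x i = true).card

/-- The `k`-th cubeSlice: inputs of Hamming weight exactly `k`. -/
def cubeSlice (ι : Type) [Fintype ι] (k : ℕ) : Set (ι → Bool) :=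
  {x | hamWeight x = k}

/-- The element distinctness function on `{0,1}^{kl}` with `k = 2^l`: the input is split
into `k` blocks of `l` bits (coordinates indexed by `Fin k × Fin l`), and the output is `1`
iff the blocks are pairwise distinct. -/
def ED (l : ℕ) (x : (Fin (2 ^ l) × Fin l) → Bool) : Bool :=
  decide (Function.Injective fun i : Fin (2 ^ l) => fun j : Fin l => x (i, j))

namespace DTree

def queried {ι : Type} : DTree ι → (ι → Bool) → Set ι
  | .leaf _, _ => ∅
  | .node i t0 t1, x => insert i (if x i then queried t1 x else queried t0 x)

theorem eval_eq_of_agree {ι : Type} (T : DTree ι) (x y : ι → Bool)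
    (h : ∀ i ∈ T.queried x, x i = y i) : T.eval x = T.eval y := by
  induction T with
  | leaf b => rfl
  | node i t0 t1 ih0 ih1 =>
    have hi : x i = y i := h i (by simp [queried])
    simp only [eval, ← hi]
    cases hx : x i with
    | true =>
      simp only [if_true]
      exact ih1 fun j hj => h j (by simp [queried, hx, hj])
    | false =>
      simp only [Bool.false_eq_true, if_false]
      exact ih0 fun j hj => h j (by simp [queried, hx, hj])

theorem card_bound {ι : Type} [DecidableEq (ι → Bool)] (T : DTree ι) (d : ℕ)
    (A : Finset (ι → Bool)) (hc : ∀ x ∈ A, T.cost x ≤ d)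
    (hB : ∀ B ⊆ A, (∀ x ∈ B, ∀ y ∈ B, ∀ i ∈ T.queried x, x i = y i) → B.card ≤ 2) :
    A.card ≤ 2 * 2 ^ d := by
  induction T generalizing d A with
  | leaf b =>
    have := hB A (Finset.Subset.refl _) (by simp [queried])
    have h1 : 1 ≤ 2 ^ d := Nat.one_le_two_pow
    omega
  | node i t0 t1 ih0 ih1 =>
    rcases A.eq_empty_or_nonempty with rfl | ⟨a, ha⟩
    · simp
    obtain ⟨e, rfl⟩ : ∃ e, d = e + 1 := by
      have := hc a ha
      simp only [cost] at this
      exact ⟨d - 1, by omega⟩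
    have h0 : (A.filter fun x => ¬ x i = true).card ≤ 2 * 2 ^ e := by
      apply ih0
      · intro x hx
        rw [Finset.mem_filter] at hx
        have := hc x hx.1
        simp only [cost, hx.2, Bool.false_eq_true, if_false] at this
        omega
      · intro B hBA h
        refine hB B (hBA.trans (Finset.filter_subset _ _)) ?_
        intro x hx y hy j hj
        have hx' := (Finset.mem_filter.1 (hBA hx)).2
        have hy' := (Finset.mem_filter.1 (hBA hy)).2
        simp only [queried, hx', Bool.false_eq_true, if_false] at hj
        rcases hj with rfl | hj
        · simp_all
        · exact h x hx y hy j hj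
    have h1 : (A.filter fun x => x i = true).card ≤ 2 * 2 ^ e := by
      apply ih1
      · intro x hx
        rw [Finset.mem_filter] at hx
        have := hc x hx.1
        simp only [cost, hx.2, if_true] at this
        omega
      · intro B hBA h
        refine hB B (hBA.trans (Finset.filter_subset _ _)) ?_
        intro x hx y hy j hj
        have hx' := (Finset.mem_filter.1 (hBA hx)).2
        have hy' := (Finset.mem_filter.1 (hBA hy)).2
        simp only [queried, hx', if_true] at hj
        rcases hj with rfl | hj
        · simp_all
        · exact h x hx y hy j hj
    have := Finset.card_filter_add_card_filter_not (s := A) (fun x => x i = true)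
    rw [pow_succ]
    omega

theorem exists_tree {ι : Type} [DecidableEq ι] (s : Finset ι) (f : (ι → Bool) → Bool)
    (hf : ∀ x y, (∀ i ∈ s, x i = y i) → f x = f y) : ∃ T : DTree ι, ∀ x, T.eval x = f x := by
  induction s using Finset.induction_on generalizing f with
  | empty => exact ⟨.leaf (f fun _ => false), fun x => hf _ _ (by simp)⟩
  | insert a s ha ih =>
    have key : ∀ b : Bool, ∃ T : DTree ι, ∀ x, T.eval x = f (Function.update x a b) := by
      intro b
      apply ih (fun x => f (Function.update x a b))
      intro x y h
      apply hf
      intro i hi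
      by_cases hia : i = a
      · subst hia; simp
      · simp [hia]
        exact h i (by simpa [hia] using hi)
    obtain ⟨T0, h0⟩ := key false
    obtain ⟨T1, h1⟩ := key true
    refine ⟨.node a T0 T1, fun x => ?_⟩
    cases hx : x a with
    | true => simp only [eval, hx, if_true, h1]; rw [← hx, Function.update_eq_self]
    | false =>
      simp only [eval, hx, Bool.false_eq_true, if_false, h0]; rw [← hx, Function.update_eq_self]

end DTree

theorem dquery_spec {ι : Type} [Fintype ι] [DecidableEq ι] (S : Set (ι → Bool))
    (f : (ι → Bool) → Bool) :
    ∃ T : DTree ι, Computes T S f ∧ ∀ x ∈ S, T.cost x ≤ Dquery S f := by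
  have hne : {d | ∃ T : DTree ι, Computes T S f ∧ ∀ x ∈ S, T.cost x ≤ d}.Nonempty := by
    obtain ⟨T, hT⟩ := DTree.exists_tree Finset.univ f (by
      intro x y h
      rw [show x = y from funext fun i => h i (Finset.mem_univ i)])
    exact ⟨Finset.univ.sup T.cost, T, fun x _ => hT x,
      fun x _ => Finset.le_sup (f := T.cost) (Finset.mem_univ x)⟩
  exact Nat.sInf_mem hne

abbrev EDInj (l : ℕ) (x : (Fin (2 ^ l) × Fin l) → Bool) : Prop :=
  Function.Injective fun i : Fin (2 ^ l) => fun j : Fin l => x (i, j)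

theorem EDInj.bij {l : ℕ} {x : (Fin (2 ^ l) × Fin l) → Bool} (h : EDInj l x) :
    Function.Bijective fun i : Fin (2 ^ l) => fun j : Fin l => x (i, j) := by
  rw [Fintype.bijective_iff_injective_and_card]
  exact ⟨h, by simp⟩

theorem two_mul_weight (α : Type) [Fintype α] [DecidableEq α] (l : ℕ)
    (e : α ≃ (Fin l → Bool)) :
    2 * (Finset.univ.filter fun p : α × Fin l => e p.1 p.2 = true).card
      = Fintype.card α * l := by
  have h1 := Finset.card_filter_add_card_filter_not (s := (Finset.univ : Finset (α × Fin l)))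
    (fun p : α × Fin l => e p.1 p.2 = true)
  have h2 : (Finset.univ.filter fun p : α × Fin l => e p.1 p.2 = true).card
      = (Finset.univ.filter fun p : α × Fin l => ¬ e p.1 p.2 = true).card := by
    let g : α × Fin l → α × Fin l := fun p => (e.symm fun j => !(e p.1 j), p.2)
    apply Finset.card_bij' (fun p _ => g p) (fun p _ => g p)
    · intro p hp
      simp only [Finset.mem_filter, Finset.mem_univ, true_and] at hp ⊢
      simp [g, hp]
    · intro p hp
      simp only [Finset.mem_filter, Finset.mem_univ, true_and] at hp ⊢
      simp [g, hp]
    · intro p hp; simp [g]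
    · intro p hp; simp [g]
  rw [Finset.card_univ, Fintype.card_prod, Fintype.card_fin] at h1
  omega

theorem EDInj.weight {l : ℕ} {x : (Fin (2 ^ l) × Fin l) → Bool} (h : EDInj l x) :
    hamWeight x = 2 ^ l * l / 2 := by
  have := two_mul_weight (Fin (2 ^ l)) l (Equiv.ofBijective _ h.bij)
  simp only [Equiv.ofBijective_apply, Fintype.card_fin] at this
  change 2 * hamWeight x = _ at this
  omega

theorem swap_key {l : ℕ} {x : (Fin (2 ^ l) × Fin l) → Bool} (h : EDInj l x)
    (i i' : Fin (2 ^ l)) (j j' : Fin l) (hp : x (i, j) = false) (hq : x (i', j') = true)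
    (hw : EDInj l (x ∘ Equiv.swap (i, j) (i', j'))) :
    j = j' ∧ ∀ t, t ≠ j → x (i, t) = x (i', t) := by
  set w := x ∘ Equiv.swap (i, j) (i', j') with hwdef
  have wp : w (i, j) = true := by simp [hwdef, hq]
  have wq : w (i', j') = false := by simp [hwdef, hp]
  have wo : ∀ r, r ≠ (i, j) → r ≠ (i', j') → w r = x r := by
    intro r h1 h2
    simp [hwdef, Equiv.swap_apply_of_ne_of_ne h1 h2]
  have sw : ∀ m0, (m0 = i ∨ m0 = i') → ∃ m, (m = i ∨ m = i') ∧ ∀ t, w (m, t) = x (m0, t) := by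
    intro m0 hm0
    obtain ⟨m, hm⟩ := hw.bij.2 (fun t => x (m0, t))
    refine ⟨m, ?_, fun t => congrFun hm t⟩
    by_contra hc
    push Not at hc
    have : m = m0 := h (by
      funext t
      have := congrFun hm t
      simp only at this ⊢
      rw [← this, wo] <;> simp [hc.1, hc.2])
    subst this
    tauto
  obtain ⟨m, hm, hmt⟩ := sw i (Or.inl rfl)
  have hmi : m ≠ i := by
    rintro rfl
    have := hmt j
    simp_all
  have hm' : m = i' := by tauto
  subst hm'
  have hjj : j = j' := by
    by_contra hne
    obtain ⟨n, hn, hnt⟩ := sw m (Or.inr rfl)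
    have hnm : n ≠ m := by
      rintro rfl
      have := hnt j'
      simp_all
    have hni : n = i := by tauto
    subst hni
    have h1 := hmt j
    have h2 := hnt j
    rw [wo (m, j) (by simp [hmi]) (by simp [hne])] at h1
    simp_all
  refine ⟨hjj, fun t ht => ?_⟩
  rw [← hmt t, wo] <;> simp [hmi, ht, ← hjj]

theorem hamWeight_swap {ι : Type} [Fintype ι] [DecidableEq ι] (x : ι → Bool) (e : Equiv.Perm ι) :
    hamWeight (x ∘ e) = hamWeight x := by
  unfold hamWeight
  apply Finset.card_bij (fun a _ => e a)
  · intro a ha; simpa using ha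
  · intro a _ b _ hab; exact e.injective hab
  · intro b hb; exact ⟨e.symm b, by simpa using hb, by simp⟩

theorem exists_diff {ι : Type} [Fintype ι] (x y : ι → Bool) (hne : x ≠ y)
    (hw : hamWeight x = hamWeight y) : ∃ p, x p = false ∧ y p = true := by
  by_contra hc
  push Not at hc
  have hsub : (Finset.univ.filter fun i => y i = true) ⊆ Finset.univ.filter fun i => x i = true := by
    intro i hi
    simp only [Finset.mem_filter, Finset.mem_univ, true_and] at hi ⊢
    by_contra hx
    exact hc i (by simpa using hx) hi
  have heq := Finset.eq_of_subset_of_card_le hsub (le_of_eq hw)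
  apply hne
  funext i
  have := Finset.ext_iff.1 heq i
  simp only [Finset.mem_filter, Finset.mem_univ, true_and] at this
  exact Bool.eq_iff_iff.2 this.symm

theorem free_unique {l : ℕ} {x : (Fin (2 ^ l) × Fin l) → Bool} (h : EDInj l x)
    (F : Set (Fin (2 ^ l) × Fin l))
    (hF : ∀ p ∈ F, ∀ q ∈ F, EDInj l (x ∘ Equiv.swap p q))
    (p q r) (hp : p ∈ F) (hq : q ∈ F) (hr : r ∈ F) (xp : x p = false) (xq : x q = true) :
    r = p ∨ r = q := by
  obtain ⟨i, j⟩ := p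
  obtain ⟨i', j'⟩ := q
  obtain ⟨a, b⟩ := r
  obtain ⟨h1, h2⟩ := swap_key h _ _ _ _ xp xq (hF _ hp _ hq)
  subst h1
  cases xr : x (a, b) with
  | false =>
    left
    obtain ⟨h3, h4⟩ := swap_key h _ _ _ _ xr xq (hF _ hr _ hq)
    subst h3
    have : a = i := h (by
      funext t
      by_cases ht : t = b
      · subst ht; simp [xr, xp]
      · simp [h4 t ht, h2 t ht])
    rw [this]
  | true =>
    right
    obtain ⟨h3, h4⟩ := swap_key h _ _ _ _ xp xr (hF _ hp _ hr)
    subst h3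
    have : a = i' := h (by
      funext t
      by_cases ht : t = j
      · subst ht; simp [xr, xq]
      · simp [← h4 t ht, ← h2 t ht])
    rw [this]

theorem fiber_two {l : ℕ} (T : DTree (Fin (2 ^ l) × Fin l))
    (hT : Computes T (cubeSlice (Fin (2 ^ l) × Fin l) (2 ^ l * l / 2)) (ED l))
    (x y z : (Fin (2 ^ l) × Fin l) → Bool) (hx : EDInj l x) (hy : EDInj l y) (hz : EDInj l z)
    (hxy : x ≠ y) (hxz : x ≠ z) (ay : ∀ i ∈ T.queried x, x i = y i)
    (az : ∀ i ∈ T.queried x, x i = z i) : y = z := by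
  have hF : ∀ p ∈ (T.queried x)ᶜ, ∀ q ∈ (T.queried x)ᶜ, EDInj l (x ∘ Equiv.swap p q) := by
    intro p hp q hq
    have hwt : x ∘ Equiv.swap p q ∈ cubeSlice (Fin (2 ^ l) × Fin l) (2 ^ l * l / 2) := by
      change hamWeight _ = _
      rw [hamWeight_swap, hx.weight]
    have h1 := hT _ hwt
    have h2 := hT x hx.weight
    rw [← T.eval_eq_of_agree x, h2] at h1
    · have h3 : ED l x = true := by simpa [ED] using hx
      rw [h3] at h1
      exact of_decide_eq_true h1.symm
    · intro i hi
      have : i ≠ p := by rintro rfl; exact hp hi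
      have : i ≠ q := by rintro rfl; exact hq hi
      simp [Equiv.swap_apply_of_ne_of_ne, *]
  have U := free_unique hx _ hF
  obtain ⟨p, xp, yp⟩ := exists_diff x y hxy (hx.weight.trans hy.weight.symm)
  obtain ⟨q, yq, xq⟩ := exists_diff y x hxy.symm (hy.weight.trans hx.weight.symm)
  obtain ⟨p', xp', zp'⟩ := exists_diff x z hxz (hx.weight.trans hz.weight.symm)
  obtain ⟨q', zq', xq'⟩ := exists_diff z x hxz.symm (hz.weight.trans hx.weight.symm)
  have fp : p ∈ (T.queried x)ᶜ := fun hm => by have := ay p hm; simp_all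
  have fq : q ∈ (T.queried x)ᶜ := fun hm => by have := ay q hm; simp_all
  have fp' : p' ∈ (T.queried x)ᶜ := fun hm => by have := az p' hm; simp_all
  have fq' : q' ∈ (T.queried x)ᶜ := fun hm => by have := az q' hm; simp_all
  have e1 : p' = p := by
    rcases U p q p' fp fq fp' xp xq with h | h
    · exact h
    · subst h; simp_all
  have e2 : q' = q := by
    rcases U p q q' fp fq fq' xp xq with h | h
    · subst h; simp_all
    · exact h
  subst e1 e2
  funext r
  by_cases hr : r ∈ T.queried x
  · rw [← ay r hr, az r hr]
  · rcases U _ _ r fp fq hr xp xq with h | h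
    · rw [h, yp, zp']
    · rw [h, yq, zq']

theorem factorial_le (l : ℕ) :
    Nat.factorial (2 ^ l) ≤
      2 * 2 ^ (Dquery (cubeSlice (Fin (2 ^ l) × Fin l) (2 ^ l * l / 2)) (ED l)) := by
  classical
  obtain ⟨T, hT, hc⟩ := dquery_spec (cubeSlice (Fin (2 ^ l) × Fin l) (2 ^ l * l / 2)) (ED l)
  let A : Finset ((Fin (2 ^ l) × Fin l) → Bool) := Finset.univ.filter fun x => EDInj l x
  have hA : ∀ x, x ∈ A ↔ EDInj l x := fun x => by simp [A]
  have hcard : Nat.factorial (2 ^ l) ≤ A.card := by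
    have e0 : Fin (2 ^ l) ≃ (Fin l → Bool) := Fintype.equivOfCardEq (by simp)
    have h1 : Fintype.card (Fin (2 ^ l) ≃ (Fin l → Bool)) = Nat.factorial (2 ^ l) := by
      rw [Fintype.card_equiv e0, Fintype.card_fin]
    rw [← h1, ← Finset.card_univ]
    apply Finset.card_le_card_of_injOn (fun e p => e p.1 p.2)
    · intro e _
      exact (hA _).2 e.injective
    · intro e _ e' _ hee
      ext i j
      exact congrFun hee (i, j)
  refine hcard.trans (T.card_bound _ A (fun x hx => hc x ((hA x).1 hx).weight) ?_)
  intro B hBA hB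
  by_contra hlt
  push Not at hlt
  obtain ⟨x, y, z, hx, hy, hz, hxy, hxz, hyz⟩ := Finset.two_lt_card_iff.1 hlt
  exact hyz (fiber_two T hT x y z ((hA _).1 (hBA hx)) ((hA _).1 (hBA hy)) ((hA _).1 (hBA hz))
    hxy hxz (hB x hx y hy) (hB x hx z hz))

theorem logb_le (l : ℕ) : Real.logb 2 ((Nat.factorial (2 ^ l) : ℝ) / 2) ≤
    (Dquery (cubeSlice (Fin (2 ^ l) × Fin l) (2 ^ l * l / 2)) (ED l) : ℝ) := by
  have h : ((Nat.factorial (2 ^ l) : ℕ) : ℝ) ≤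
      2 * 2 ^ (Dquery (cubeSlice (Fin (2 ^ l) × Fin l) (2 ^ l * l / 2)) (ED l)) := by
    exact_mod_cast factorial_le l
  have hpos : (0 : ℝ) < (Nat.factorial (2 ^ l) : ℝ) := by exact_mod_cast Nat.factorial_pos _
  rw [Real.logb_le_iff_le_rpow (by norm_num) (by positivity), Real.rpow_natCast]
  linarith

theorem logb_lower (l : ℕ) : ((2 ^ l * l : ℕ) : ℝ) - 3 * (2 : ℝ) ^ l ≤
    Real.logb 2 ((Nat.factorial (2 ^ l) : ℝ) / 2) := by
  have hpos : (0 : ℝ) < (Nat.factorial (2 ^ l) : ℝ) := by exact_mod_cast Nat.factorial_pos _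
  have h1 := Real.pow_div_factorial_le_exp ((2 ^ l : ℕ) : ℝ) (by positivity) (2 ^ l)
  have h2 : Real.exp ((2 ^ l : ℕ) : ℝ) ≤ 4 ^ (2 ^ l) := by
    rw [← Real.exp_one_pow]
    exact pow_le_pow_left₀ (Real.exp_pos _).le (by linarith [Real.exp_one_lt_d9]) _
  have h3 : (((2 ^ l : ℕ) : ℝ)) ^ (2 ^ l) ≤ 4 ^ (2 ^ l) * (Nat.factorial (2 ^ l) : ℝ) := by
    rw [← div_le_iff₀ hpos]; exact h1.trans h2
  have h4 : (2 : ℝ) ^ (2 ^ l * l) ≤ 2 ^ (3 * 2 ^ l) * ((Nat.factorial (2 ^ l) : ℝ) / 2) := by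
    have e1 : (((2 ^ l : ℕ) : ℝ)) ^ (2 ^ l) = (2 : ℝ) ^ (2 ^ l * l) := by
      push_cast; rw [← pow_mul, mul_comm]
    have e2 : (2 : ℝ) ^ (3 * 2 ^ l) = 4 ^ (2 ^ l) * 2 ^ (2 ^ l) := by
      rw [pow_mul, ← mul_pow]; norm_num
    have e3 : (2 : ℝ) ≤ 2 ^ (2 ^ l) := by
      calc (2 : ℝ) = 2 ^ 1 := by norm_num
        _ ≤ _ := pow_le_pow_right₀ (by norm_num) Nat.one_le_two_pow
    rw [← e1, e2]
    refine h3.trans ?_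
    have : (0 : ℝ) ≤ 4 ^ (2 ^ l) * (Nat.factorial (2 ^ l) : ℝ) := by positivity
    nlinarith
  have h5 := Real.logb_le_logb_of_le (b := 2) (by norm_num) (by positivity) h4
  rw [Real.logb_mul (by positivity) (by positivity), Real.logb_pow, Real.logb_pow,
    Real.logb_self_eq_one (by norm_num)] at h5
  push_cast at h5 ⊢
  linarith



/-- On the balanced slice of `{0,1}^N` (`N = kl`, `k = 2^l`), element distinctness has
deterministic query complexity at least `log₂(k!/2)`; in particular
`D(ED) ≥ N - O(N / log N)`. -/
theorem stmt16 :
    (∀ l : ℕ, 1 ≤ l →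
      Real.logb 2 ((Nat.factorial (2 ^ l) : ℝ) / 2) ≤
        (Dquery (cubeSlice (Fin (2 ^ l) × Fin l) (2 ^ l * l / 2)) (ED l) : ℝ)) ∧
    (∃ c : ℝ, 0 < c ∧ ∀ l : ℕ, 1 ≤ l →
      ((2 ^ l * l : ℕ) : ℝ) - c * (((2 ^ l * l : ℕ) : ℝ) / Real.logb 2 ((2 ^ l * l : ℕ) : ℝ)) ≤
        (Dquery (cubeSlice (Fin (2 ^ l) × Fin l) (2 ^ l * l / 2)) (ED l) : ℝ)) := by
  refine ⟨fun l _ => logb_le l, 6, by norm_num, fun l hl => ?_⟩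
  refine le_trans ?_ ((logb_lower l).trans (logb_le l))
  have hl' : (1 : ℝ) ≤ l := by exact_mod_cast hl
  have hk : (0 : ℝ) < 2 ^ l := by positivity
  have hN : (2 : ℝ) ≤ ((2 ^ l * l : ℕ) : ℝ) := by
    have : 2 ^ 1 ≤ 2 ^ l := Nat.pow_le_pow_right (by norm_num) hl
    exact_mod_cast (by nlinarith : 2 ≤ 2 ^ l * l)
  have hpos : 0 < Real.logb 2 ((2 ^ l * l : ℕ) : ℝ) :=
    Real.logb_pos (by norm_num) (by linarith)
  have hub : Real.logb 2 ((2 ^ l * l : ℕ) : ℝ) ≤ 2 * l := by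
    have h1 : ((2 ^ l * l : ℕ) : ℝ) ≤ 2 ^ (2 * l) := by
      have : 2 ^ l * l ≤ 2 ^ (2 * l) := by
        rw [two_mul, pow_add]
        exact Nat.mul_le_mul_left _ Nat.lt_two_pow_self.le
      exact_mod_cast this
    rw [Real.logb_le_iff_le_rpow (by norm_num) (by linarith)]
    refine h1.trans (le_of_eq ?_)
    rw [← Real.rpow_natCast]
    push_cast
    rfl
  have hq : (2 : ℝ) ^ l / 2 ≤ ((2 ^ l * l : ℕ) : ℝ) / Real.logb 2 ((2 ^ l * l : ℕ) : ℝ) := by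
    rw [le_div_iff₀ hpos]
    push_cast at hub ⊢
    nlinarith
  linarith
end

section
/- Let f : {0,1}^n → {0,1} and g : {0,1}^m → {0,1} be symmetric Boolean functions and let N = nm. Then for every 0 ≤ w ≤ N, the restriction of the composed function f∘g to the slice {z ∈ {0,1}^N : |z| = w} satisfies D(f∘g) ≤ min{(n−1)·m, nm − ⌈n/m⌉}, and consequently D(f∘g) ≤ N − N^{1/3}. -/
/-- A Boolean function is symmetric if its value depends only on the Hamming weight of
its input. -/
def SymmFun {ι : Type} [Fintype ι] (f : (ι → Bool) → Bool) : Prop :=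
  ∀ x y : ι → Bool, hamWeight x = hamWeight y → f x = f y

/-- Keep the queried bits, put `false` elsewhere. -/
def maskOn {ι : Type} [DecidableEq ι] (Q : Finset ι) (x : ι → Bool) : ι → Bool :=
  fun i => if i ∈ Q then x i else false

theorem exists_query {ι : Type} [DecidableEq ι] (Q : Finset ι) :
    ∀ k : (ι → Bool) → DTree ι, ∃ T : DTree ι, ∀ x, T.eval x = (k (maskOn Q x)).eval x ∧
      T.cost x = Q.card + (k (maskOn Q x)).cost x := by
  induction Q using Finset.induction_on with
  | empty =>
    intro k
    refine ⟨k (fun _ => false), fun x => ?_⟩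
    have : maskOn ∅ x = fun _ => false := by funext i; simp [maskOn]
    simp [this]
  | insert a Q ha ih =>
    intro k
    obtain ⟨T, hT⟩ := ih (fun y => DTree.node a (k (Function.update y a false))
      (k (Function.update y a true)))
    refine ⟨T, fun x => ?_⟩
    obtain ⟨h1, h2⟩ := hT x
    have key : maskOn (insert a Q) x = Function.update (maskOn Q x) a (x a) := by
      funext i
      by_cases h : i = a
      · subst h; simp [maskOn]
      · simp [maskOn, h]
    rw [h1, h2, key, Finset.card_insert_of_notMem ha]
    cases hx : x a <;> simp [DTree.eval, DTree.cost, hx] <;> ring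

theorem maskOn_eq {ι : Type} [DecidableEq ι] {Q : Finset ι} {x y : ι → Bool}
    (h : maskOn Q x = maskOn Q y) : ∀ i ∈ Q, x i = y i := by
  intro i hi
  have := congrFun h i
  simpa [maskOn, hi] using this

theorem Dquery_le {ι : Type} [DecidableEq ι] (S : Set (ι → Bool)) (F : (ι → Bool) → Bool)
    (Q : Finset ι) (R : (ι → Bool) → Finset ι) (d : ℕ)
    (hF : ∀ x ∈ S, ∀ y ∈ S, maskOn Q x = maskOn Q y →
      (∀ i ∈ R (maskOn Q x), x i = y i) → F x = F y)
    (hd : ∀ x ∈ S, Q.card + (R (maskOn Q x)).card ≤ d) : Dquery S F ≤ d := by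
  classical
  apply Nat.sInf_le
  let L : (ι → Bool) → (ι → Bool) → Bool := fun u v =>
    if h : ∃ x ∈ S, maskOn Q x = u ∧ maskOn (R u) x = v then F h.choose else false
  choose T2 hT2 using fun u => exists_query (R u) (fun v => DTree.leaf (L u v))
  obtain ⟨T, hT⟩ := exists_query Q T2
  refine ⟨T, fun x hx => ?_, fun x hx => ?_⟩
  · rw [(hT x).1, (hT2 _ x).1]
    have h : ∃ x' ∈ S, maskOn Q x' = maskOn Q x ∧
      maskOn (R (maskOn Q x)) x' = maskOn (R (maskOn Q x)) x := ⟨x, hx, rfl, rfl⟩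
    simp only [DTree.eval, L]
    rw [dif_pos h]
    obtain ⟨h1, h2, h3⟩ := h.choose_spec
    refine hF _ h1 _ hx h2 ?_
    rw [h2]
    exact maskOn_eq h3
  · rw [(hT x).2, (hT2 _ x).2]
    simpa [DTree.cost] using hd x hx

theorem hamWeight_eq_sum {ι : Type} [Fintype ι] (x : ι → Bool) :
    (hamWeight x : ℤ) = ∑ i, ((x i).toNat : ℤ) := by
  rw [hamWeight, Finset.card_filter]
  push_cast
  apply Finset.sum_congr rfl
  intro i _
  cases x i <;> simp

theorem symm_factor {ι : Type} [Fintype ι] {g : (ι → Bool) → Bool} (hg : SymmFun g) :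
    ∃ G : ℕ → ℤ, ∀ z, ((g z).toNat : ℤ) = G (hamWeight z) := by
  have h : Function.FactorsThrough g (hamWeight (ι := ι)) := fun x y hxy => hg x y hxy
  refine ⟨fun k => ((Function.extend (hamWeight (ι := ι)) g (fun _ => false) k).toNat : ℤ),
    fun z => ?_⟩
  simp only [h.extend_apply]

theorem slice_sum {n m w : ℕ} {x : Fin n × Fin m → Bool}
    (hx : x ∈ cubeSlice (Fin n × Fin m) w) :
    ∑ i, (hamWeight (fun j => x (i, j)) : ℤ) = w := by
  have h : hamWeight x = w := hx
  rw [← h, hamWeight_eq_sum, Fintype.sum_prod_type]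
  simp only [hamWeight_eq_sum]

theorem bound_one (n m : ℕ) (f : (Fin n → Bool) → Bool) (g : (Fin m → Bool) → Bool)
    (hg : SymmFun g) (w : ℕ) :
    Dquery (cubeSlice (Fin n × Fin m) w) (fun z => f fun i => g fun j => z (i, j)) ≤
        (n - 1) * m := by
  rcases n with _ | n
  · refine Dquery_le _ _ ∅ (fun _ => ∅) _ ?_ (by simp)
    intro x _ y _ _ _
    have : x = y := funext fun p => p.1.elim0
    rw [this]
  · refine Dquery_le _ _ ((Finset.univ.erase (Fin.last n)) ×ˢ Finset.univ) (fun _ => ∅) _ ?_ ?_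
    · intro x hx y hy hxy _
      have hxy := maskOn_eq hxy
      have hne : ∀ i, i ≠ Fin.last n → ∀ j, x (i, j) = y (i, j) := by
        intro i hi j
        exact hxy (i, j) (by simp [hi])
      have hs := (slice_sum hx).trans (slice_sum hy).symm
      rw [← Finset.add_sum_erase _ _ (Finset.mem_univ (Fin.last n)),
        ← Finset.add_sum_erase _ _ (Finset.mem_univ (Fin.last n))] at hs
      have he : ∑ i ∈ Finset.univ.erase (Fin.last n), (hamWeight (fun j => x (i, j)) : ℤ) =
          ∑ i ∈ Finset.univ.erase (Fin.last n), (hamWeight (fun j => y (i, j)) : ℤ) := by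
        apply Finset.sum_congr rfl
        intro i hi
        simp only [hne i (Finset.ne_of_mem_erase hi)]
      rw [he] at hs
      have hs' := add_right_cancel hs
      congr 1
      funext i
      by_cases hi : i = Fin.last n
      · subst hi
        exact hg _ _ (by exact_mod_cast hs')
      · simp only [hne i hi]
    · intro x _
      simp [Finset.card_product]

theorem bound_two (n m : ℕ) (f : (Fin n → Bool) → Bool) (g : (Fin (m + 1) → Bool) → Bool)
    (hf : SymmFun f) (hg : SymmFun g) (w : ℕ) :
    Dquery (cubeSlice (Fin n × Fin (m + 1)) w) (fun z => f fun i => g fun j => z (i, j)) ≤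
        n * (m + 1) - (n + (m + 1) - 1) / (m + 1) := by
  classical
  obtain ⟨G, hG⟩ := symm_factor hg
  let p : (Fin n × Fin (m + 1) → Bool) → Fin n → ℕ :=
    fun x i => hamWeight (fun j : Fin m => x (i, j.castSucc))
  have hp : ∀ x i, p x i < m + 1 := by
    intro x i
    have : p x i ≤ Fintype.card (Fin m) := Finset.card_filter_le _ _
    simp at this
    omega
  have hcls : ∀ x, ∃ a : ℕ, n ≤ (m + 1) * (Finset.univ.filter fun i => p x i = a).card := by
    intro x
    by_contra! hcon
    have h0 : ∑ a ∈ Finset.range (m + 1), (Finset.univ.filter fun i => p x i = a).card = n := by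
      rw [← Finset.card_eq_sum_card_fiberwise]
      · simp
      · intro i _
        simpa using hp x i
    have h1 : ∑ a ∈ Finset.range (m + 1),
        (m + 1) * (Finset.univ.filter fun i => p x i = a).card <
        ∑ a ∈ Finset.range (m + 1), n :=
      Finset.sum_lt_sum_of_nonempty (by simp) (fun a _ => hcon a)
    rw [← Finset.mul_sum, h0] at h1
    simp at h1
  choose A hA using hcls
  have hblock : ∀ (x : Fin n × Fin (m + 1) → Bool) i, (hamWeight (fun j => x (i, j))) =
      p x i + (x (i, Fin.last m)).toNat := by
    intro x i
    have : (hamWeight (fun j => x (i, j)) : ℤ) = p x i + (x (i, Fin.last m)).toNat := by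
      simp only [p, hamWeight_eq_sum]
      rw [Fin.sum_univ_castSucc]
    exact_mod_cast this
  refine Dquery_le _ _ (Finset.univ ×ˢ (Finset.univ.erase (Fin.last m)))
    (fun u => (Finset.univ.filter fun i => p u i ≠ A u) ×ˢ {Fin.last m}) _ ?_ ?_
  · intro x hx y hy hxy hR
    set Q : Finset (Fin n × Fin (m + 1)) := Finset.univ ×ˢ (Finset.univ.erase (Fin.last m))
    set u := maskOn Q x with hu
    have hpx : ∀ z, maskOn Q z = u → ∀ i, p z i = p u i := by
      intro z hz i
      simp only [p]
      rw [← hz]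
      congr 1
      funext j
      simp [maskOn, Q, Fin.castSucc_ne_last]
    have hpx1 := hpx x rfl
    have hpx2 := hpx y hxy.symm
    have hag := maskOn_eq (hu.symm.trans hxy)
    have key : ∀ i, ((g fun j => x (i, j)).toNat : ℤ) - ((g fun j => y (i, j)).toNat : ℤ) =
        (G (A u + 1) - G (A u)) *
        ((hamWeight (fun j => x (i, j)) : ℤ) - (hamWeight (fun j => y (i, j)) : ℤ)) := by
      intro i
      rw [hG, hG, hblock, hblock, hpx1, hpx2]
      by_cases hi : p u i = A u
      · rw [hi]
        cases x (i, Fin.last m) <;> cases y (i, Fin.last m) <;> simp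
      · rw [hR (i, Fin.last m) (by simp [hi])]
        simp
    have hsum := Finset.sum_congr (rfl : (Finset.univ : Finset (Fin n)) = Finset.univ)
      (fun i _ => key i)
    rw [← Finset.mul_sum, Finset.sum_sub_distrib, Finset.sum_sub_distrib, slice_sum hx,
      slice_sum hy, sub_self, mul_zero, sub_eq_zero, ← hamWeight_eq_sum (fun i => g fun j => x (i, j)),
      ← hamWeight_eq_sum (fun i => g fun j => y (i, j))] at hsum
    exact hf _ _ (by exact_mod_cast hsum)
  · intro x _
    generalize maskOn _ x = u
    have h1 := hA u
    have h2 := Finset.card_filter_add_card_filter_not (s := (Finset.univ : Finset (Fin n)))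
      (fun i => p u i = A u)
    simp only [Finset.card_univ, Fintype.card_fin] at h2
    simp only [Finset.card_product, Finset.card_univ, Fintype.card_fin,
      Finset.card_erase_of_mem (Finset.mem_univ _), Finset.card_singleton, mul_one, ne_eq]
    have h3 : (n + (m + 1) - 1) / (m + 1) ≤ (Finset.univ.filter fun i => p u i = A u).card := by
      rw [← Nat.lt_succ_iff, Nat.div_lt_iff_lt_mul (by omega)]
      rw [Nat.succ_mul, mul_comm]
      omega
    have h4 : n * (m + 1) = n * m + n := by ring
    rw [h4]
    have h5 : m + 1 - 1 = m := rfl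
    rw [h5]
    omega

theorem stmt17 (n m : ℕ) (f : (Fin n → Bool) → Bool) (g : (Fin m → Bool) → Bool)
    (hf : SymmFun f) (hg : SymmFun g) (w : ℕ) (hw : w ≤ n * m) :
    Dquery (cubeSlice (Fin n × Fin m) w) (fun z => f fun i => g fun j => z (i, j)) ≤
        min ((n - 1) * m) (n * m - (n + m - 1) / m) ∧
      (Dquery (cubeSlice (Fin n × Fin m) w) (fun z => f fun i => g fun j => z (i, j)) : ℝ) ≤
        ((n * m : ℕ) : ℝ) - ((n * m : ℕ) : ℝ) ^ ((1 : ℝ) / 3) := by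
  have h1 := bound_one n m f g hg w
  have h2 : Dquery (cubeSlice (Fin n × Fin m) w) (fun z => f fun i => g fun j => z (i, j)) ≤
      n * m - (n + m - 1) / m := by
    rcases m with _ | m
    · simpa using h1
    · exact bound_two n m f g hf hg w
  refine ⟨le_min h1 h2, ?_⟩
  generalize Dquery (cubeSlice (Fin n × Fin m) w) (fun z => f fun i => g fun j => z (i, j)) = d
    at h1 h2
  rcases Nat.eq_zero_or_pos n with hn | hn
  · subst hn
    have : d = 0 := by simpa using h1
    subst this
    norm_num
  rcases Nat.eq_zero_or_pos m with hm | hm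
  · subst hm
    have : d = 0 := by simpa using h1
    subst this
    norm_num
  set c := (n + m - 1) / m with hc
  have hcn : n ≤ m * c := by
    have := Nat.lt_mul_div_succ (n + m - 1) hm
    rw [← hc, Nat.mul_add] at this
    omega
  have hcle : c ≤ n * m := by
    have : c ≤ n := by
      rw [hc, ← Nat.lt_succ_iff, Nat.div_lt_iff_lt_mul hm, Nat.succ_mul]
      have : n ≤ n * m := Nat.le_mul_of_pos_right n hm
      omega
    exact this.trans (Nat.le_mul_of_pos_right n hm)
  have hk : ∃ k : ℕ, m ≤ k ∧ c ≤ k ∧ d + k ≤ n * m := by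
    refine ⟨max m c, le_max_left _ _, le_max_right _ _, ?_⟩
    have e : (n - 1) * m + m = n * m := by
      obtain ⟨n', rfl⟩ : ∃ n', n = n' + 1 := ⟨n - 1, by omega⟩
      simp; ring
    rcases max_choice m c with h | h <;> rw [h] <;> omega
  obtain ⟨k, hk1, hk2, hk3⟩ := hk
  have hcube : n * m ≤ k ^ 3 := by
    calc n * m ≤ (m * c) * m := Nat.mul_le_mul_right _ hcn
      _ ≤ (k * k) * k := by gcongr
      _ = k ^ 3 := by ring
  have hr : ((n * m : ℕ) : ℝ) ^ ((1 : ℝ) / 3) ≤ k := by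
    calc ((n * m : ℕ) : ℝ) ^ ((1 : ℝ) / 3) ≤ ((k : ℝ) ^ 3) ^ ((1 : ℝ) / 3) := by
          apply Real.rpow_le_rpow (by positivity) _ (by norm_num)
          exact_mod_cast hcube
      _ = k := by
          rw [← Real.rpow_natCast, ← Real.rpow_mul (by positivity)]
          norm_num
  have hd : (d : ℝ) + k ≤ ((n * m : ℕ) : ℝ) := by exact_mod_cast hk3
  linarith
end

section
/- For every Boolean function g : {0,1}^n → {0,1}, the lifted function f_g on the balanced slice of {0,1}^{2n}, defined by f_g(x,y) = g(x) for all (x,y) with x, y ∈ {0,1}^n and |x| + |y| = n, satisfies D(f_g) = D(g). -/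
/-- Relabel a tree on `ι` as a tree on `ι ⊕ ι` querying only the left half. -/
def DTree.lift {ι : Type} : DTree ι → DTree (ι ⊕ ι)
  | .leaf b => .leaf b
  | .node i t0 t1 => .node (Sum.inl i) (DTree.lift t0) (DTree.lift t1)

/-- Simulate a tree on `ι ⊕ ι` on the input `(x, ¬x)`. -/
def DTree.fold {ι : Type} : DTree (ι ⊕ ι) → DTree ι
  | .leaf b => .leaf b
  | .node (Sum.inl i) t0 t1 => .node i (DTree.fold t0) (DTree.fold t1)
  | .node (Sum.inr i) t0 t1 => .node i (DTree.fold t1) (DTree.fold t0)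

theorem DTree.lift_spec {ι : Type} (T : DTree ι) (z : ι ⊕ ι → Bool) :
    T.lift.eval z = T.eval (fun i => z (Sum.inl i)) ∧
    T.lift.cost z = T.cost (fun i => z (Sum.inl i)) := by
  induction T with
  | leaf b => exact ⟨rfl, rfl⟩
  | node i t0 t1 h0 h1 =>
    simp only [DTree.lift, DTree.eval, DTree.cost, h0.1, h0.2, h1.1, h1.2, and_self]

theorem DTree.fold_spec {ι : Type} (T : DTree (ι ⊕ ι)) (x : ι → Bool) :
    T.fold.eval x = T.eval (Sum.elim x (fun i => !x i)) ∧
    T.fold.cost x = T.cost (Sum.elim x (fun i => !x i)) := by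
  induction T with
  | leaf b => exact ⟨rfl, rfl⟩
  | node i t0 t1 h0 h1 =>
    rcases i with i | i <;> cases hx : x i <;>
      simp [DTree.fold, DTree.eval, DTree.cost, h0.1, h0.2, h1.1, h1.2, hx]

theorem elim_mem_slice (n : ℕ) (x : Fin n → Bool) :
    Sum.elim x (fun i => !x i) ∈ cubeSlice (Fin n ⊕ Fin n) n := by
  change hamWeight _ = n
  unfold hamWeight
  rw [Finset.card_filter, Fintype.sum_sum_type, ← Finset.sum_add_distrib]
  refine (Finset.sum_congr rfl (g := fun _ => 1) fun i _ => ?_).trans (by simp)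
  cases h : x i <;> simp [h]

/-- For every `g : {0,1}^n → {0,1}`, the lifted function `f_g(x,y) = g(x)` on the balanced
slice of `{0,1}^{2n}` (coordinates indexed by `Fin n ⊕ Fin n`, the left summand carrying
`x` and the right carrying `y`) satisfies `D(f_g) = D(g)`. -/
theorem stmt18 (n : ℕ) (g : (Fin n → Bool) → Bool) :
    Dquery (cubeSlice (Fin n ⊕ Fin n) n) (fun z => g fun i => z (Sum.inl i)) =
      Dquery (Set.univ : Set ((Fin n → Bool))) g := by
  unfold Dquery
  congr 1
  ext d
  constructor
  · rintro ⟨T, hT, hc⟩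
    refine ⟨T.fold, fun x _ => ?_, fun x _ => ?_⟩
    · rw [(T.fold_spec x).1, hT _ (elim_mem_slice n x)]
      rfl
    · rw [(T.fold_spec x).2]
      exact hc _ (elim_mem_slice n x)
  · rintro ⟨T, hT, hc⟩
    refine ⟨T.lift, fun z _ => ?_, fun z _ => ?_⟩
    · rw [(T.lift_spec z).1, hT _ (Set.mem_univ _)]
    · rw [(T.lift_spec z).2]
      exact hc _ (Set.mem_univ _)
end

section
/- There exists a Boolean function f on the balanced slice of {0,1}^n (for infinitely many n, namely n a perfect square with √n even) with bs(f) ≥ s(f)²/16; specifically, the restriction to the balanced slice of the Rubinstein function (the OR of √n copies of the indicator, on 2k = √n bits, of strings of the form (00)^i 11 (00)^{k−i−1}) has bs(f) ≥ n/4 and s(f) ≤ 2√n. -/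
/-- Flip the bits of `x` at the positions in `B`. -/
def flipOn {ι : Type} [DecidableEq ι] (x : ι → Bool) (B : Finset ι) : ι → Bool :=
  fun i => if i ∈ B then !(x i) else x i

/-- `B` is a sensitive block of `x` for `f` on the domain `S`: flipping `x` on `B` stays in
the domain and changes the value of `f`. -/
def SensBlock {ι : Type} [DecidableEq ι] (S : Set (ι → Bool)) (f : (ι → Bool) → Bool)
    (x : ι → Bool) (B : Finset ι) : Prop :=
  flipOn x B ∈ S ∧ f (flipOn x B) ≠ f x

/-- Block sensitivity of `f` at `x`: the maximum number of pairwise disjoint sensitive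
blocks of `x`. -/
noncomputable def bsAt {ι : Type} [DecidableEq ι] (S : Set (ι → Bool))
    (f : (ι → Bool) → Bool) (x : ι → Bool) : ℕ :=
  sSup {m | ∃ 𝓑 : Finset (Finset ι), (∀ B ∈ 𝓑, SensBlock S f x B) ∧
    (𝓑 : Set (Finset ι)).Pairwise (fun A B => Disjoint A B) ∧ 𝓑.card = m}

/-- Block sensitivity of `f` on the domain `S`. -/
noncomputable def bsM {ι : Type} [DecidableEq ι] (S : Set (ι → Bool))
    (f : (ι → Bool) → Bool) : ℕ :=
  sSup {m | ∃ x ∈ S, bsAt S f x = m}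

/-- Sensitivity (for slice functions) of `f` at `x`: the maximum number of pairwise
disjoint sensitive blocks of `x` of size exactly `2`. -/
noncomputable def sAt {ι : Type} [DecidableEq ι] (S : Set (ι → Bool))
    (f : (ι → Bool) → Bool) (x : ι → Bool) : ℕ :=
  sSup {m | ∃ 𝓑 : Finset (Finset ι), (∀ B ∈ 𝓑, SensBlock S f x B ∧ B.card = 2) ∧
    (𝓑 : Set (Finset ι)).Pairwise (fun A B => Disjoint A B) ∧ 𝓑.card = m}

/-- Sensitivity of `f` on the domain `S`. -/
noncomputable def sM {ι : Type} [DecidableEq ι] (S : Set (ι → Bool))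
    (f : (ι → Bool) → Bool) : ℕ :=
  sSup {m | ∃ x ∈ S, sAt S f x = m}

/-- The Rubinstein function on `n = (2k)²` bits: the input is split into `2k` blocks of
`2k` bits (coordinates indexed by `Fin (2k) × Fin (2k)`), and the output is `1` iff some
block is of the form `(00)^i 11 (00)^{k-i-1}`. -/
def rub (k : ℕ) (x : (Fin (2 * k) × Fin (2 * k)) → Bool) : Bool :=
  decide (∃ j : Fin (2 * k), ∃ i : Fin k, ∀ t : Fin (2 * k),
    x (j, t) = true ↔ (t.1 = 2 * i.1 ∨ t.1 = 2 * i.1 + 1))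

open Finset in
theorem aux_comb {α ι : Type} [DecidableEq α] (T : ι → Finset α)
    (hdis : ∀ i i', ∀ a, a ∈ T i → a ∈ T i' → i = i') (hcard : ∀ i, (T i).card = 2)
    (hcov : ∀ a, ∃ i, a ∈ T i) (O : Finset α) (hO : ∀ i, O ≠ T i) :
    ∃ P : Finset α, P.card ≤ 2 ∧ ∀ D : Finset α, ∀ i, symmDiff O D = T i →
      (D ∩ O).card ≤ 1 → (D \ O).card ≤ 1 → ∃ a ∈ P, a ∈ D := by
  have key : ∀ D : Finset α, ∀ i, symmDiff O D = T i → ∀ a, (a ∈ T i ↔ (a ∈ O ∧ a ∉ D ∨ a ∈ D ∧ a ∉ O)) := by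
    intro D i h a
    rw [← h, mem_symmDiff]
  by_cases hw : ∃ D0 : Finset α, ∃ i0, symmDiff O D0 = T i0 ∧ (D0 ∩ O).card ≤ 1 ∧ (D0 \ O).card ≤ 1
  swap
  · refine ⟨∅, by simp, fun D i h1 h2 h3 => (hw ⟨D, i, h1, h2, h3⟩).elim⟩
  obtain ⟨D0, i0, h0, h0a, h0b⟩ := hw
  have hk0 := key D0 i0 h0
  rcases Nat.lt_or_ge 2 O.card with hc | hc
  · -- large
    have hsub : O \ T i0 ⊆ D0 ∩ O := by
      intro a; have := hk0 a; simp only [mem_sdiff, mem_inter]; tauto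
    have hs1 := (card_le_card hsub).trans h0a
    refine ⟨O \ T i0, by omega, fun D i h1 h2 h3 => ?_⟩
    by_contra! hcon
    have hk := key D i h1
    have hsum := card_sdiff_add_card_inter O (T i0)
    have hTi0 := hcard i0
    have h2' : (O ∩ T i0).card ≤ (T i0).card := card_le_card inter_subset_right
    have hne : (O \ T i0).Nonempty := by
      rw [← card_pos]; omega
    obtain ⟨b, hb⟩ := hne
    have hbD := hcon b hb
    rw [mem_sdiff] at hb
    have hbi : b ∈ T i := (hk b).2 (Or.inl ⟨hb.1, hbD⟩)
    have hii : i ≠ i0 := by rintro rfl; exact hb.2 hbi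
    have hsub2 : O ∩ T i0 ⊆ D ∩ O := by
      intro a ha
      rw [mem_inter] at ha ⊢
      refine ⟨?_, ha.1⟩
      by_contra haD
      exact hii (hdis i i0 a ((hk a).2 (Or.inl ⟨ha.1, haD⟩)) ha.2)
    have := (card_le_card hsub2).trans h2
    omega
  · rcases Nat.lt_or_ge O.card 2 with hc1 | hc2
    · have hOne : O.Nonempty := by
        rw [nonempty_iff_ne_empty]
        rintro rfl
        have h3 : T i0 = D0 := by rw [← h0]; ext a; simp [mem_symmDiff]
        have := hcard i0
        rw [h3] at this
        simp at h0b; omega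
      have hO1 : O.card = 1 := by have := hOne.card_pos; omega
      obtain ⟨o, rfl⟩ := card_eq_one.1 hO1
      obtain ⟨p, hp⟩ := hcov o
      refine ⟨T p \ {o}, ?_, fun D i h1 h2 h3 => ?_⟩
      · exact (card_le_card sdiff_subset).trans (hcard p).le
      · by_contra! hcon
        have hk := key D i h1
        have hne : ∃ q ∈ T p, q ≠ o := by
          have : 1 < (T p).card := by rw [hcard]; norm_num
          obtain ⟨q, hq, h⟩ := exists_mem_ne this o
          exact ⟨q, hq, h⟩
        obtain ⟨q, hq, hqo⟩ := hne
        have hqD : q ∉ D := hcon q (by simp [hq, hqo])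
        have hqi : q ∉ T i := by rw [hk]; simp [hqo, hqD]
        have hoi : o ∉ T i := by
          intro h; have := hdis i p o h hp; subst this; exact hqi hq
        have hsub : T i ⊆ D \ {o} := by
          intro a ha
          have h5 := (hk a).1 ha
          have : a ≠ o := by rintro rfl; exact hoi ha
          simp only [mem_singleton, this, mem_sdiff] at h5 ⊢
          tauto
        have := (card_le_card hsub)
        rw [hcard] at this; omega
    · refine ⟨O, hc, fun D i h1 h2 h3 => ?_⟩
      by_contra! hcon
      have hk := key D i h1
      apply hO i
      apply eq_of_subset_of_card_le
      · intro a ha; exact (hk a).2 (Or.inl ⟨ha, hcon a ha⟩)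
      · rw [hcard]; exact hc2

open Finset in
theorem aux_ones {ι : Type} [Fintype ι] [DecidableEq ι] (x : ι → Bool) (B : Finset ι) :
    (univ.filter fun i => flipOn x B i = true) = symmDiff (univ.filter fun i => x i = true) B := by
  ext a
  simp only [flipOn, mem_filter, mem_univ, true_and, mem_symmDiff]
  by_cases h : a ∈ B <;> simp [h]

open Finset in
theorem aux_flip {ι : Type} [Fintype ι] [DecidableEq ι] (m : ℕ) (x : ι → Bool) (B : Finset ι)
    (hx : x ∈ cubeSlice ι m) (hB : flipOn x B ∈ cubeSlice ι m) (h2 : B.card = 2) :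
    (B ∩ (univ.filter fun i => x i = true)).card = 1 ∧
    (B \ (univ.filter fun i => x i = true)).card = 1 := by
  simp only [cubeSlice, hamWeight, Set.mem_ofPred_eq, aux_ones] at hx hB
  set O := (univ.filter fun i => x i = true)
  have e : symmDiff O B = (O \ B) ∪ (B \ O) := rfl
  rw [e, card_union_of_disjoint disjoint_sdiff_sdiff] at hB
  have h3 := card_sdiff_add_card_inter O B
  have h4 := card_sdiff_add_card_inter B O
  rw [inter_comm] at h3
  omega

open Finset in
theorem aux_sAt {ι : Type} [DecidableEq ι] (S : Set (ι → Bool))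
    (f : (ι → Bool) → Bool) (x : ι → Bool) (U : Finset ι) (m : ℕ) (hU : U.card ≤ m)
    (h : ∀ B, SensBlock S f x B → B.card = 2 → ∃ a ∈ U, a ∈ B) : sAt S f x ≤ m := by
  apply csSup_le'
  rintro c ⟨𝓑, h1, h2, rfl⟩
  refine le_trans ?_ hU
  rcases 𝓑.eq_empty_or_nonempty with h0 | ⟨B0, hB0⟩
  · simp [h0]
  obtain ⟨a0, -, -⟩ := h B0 (h1 B0 hB0).1 (h1 B0 hB0).2
  haveI : Nonempty ι := ⟨a0⟩
  choose! g hg using h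
  apply card_le_card_of_injOn g
  · intro B hB; exact (hg B (h1 B hB).1 (h1 B hB).2).1
  · intro A hA B hB hAB
    by_contra hne
    have := h2 hA hB hne
    have ha := (hg A (h1 A hA).1 (h1 A hA).2).2
    have hb := (hg B (h1 B hB).1 (h1 B hB).2).2
    rw [← hAB] at hb
    exact disjoint_left.1 this ha hb

open Finset in
theorem aux_bs {ι : Type} [Fintype ι] [DecidableEq ι] (S : Set (ι → Bool))
    (f : (ι → Bool) → Bool) (x : ι → Bool) (hx : x ∈ S) (𝓑 : Finset (Finset ι))
    (h1 : ∀ B ∈ 𝓑, SensBlock S f x B)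
    (h2 : (𝓑 : Set (Finset ι)).Pairwise (fun A B => Disjoint A B)) : 𝓑.card ≤ bsM S f := by
  have h : 𝓑.card ≤ bsAt S f x := by
    apply le_csSup
    · refine ⟨Fintype.card (Finset ι), ?_⟩
      rintro c ⟨𝓒, -, -, rfl⟩
      exact card_le_univ _
    · exact ⟨𝓑, h1, h2, rfl⟩
  refine h.trans ?_
  apply le_csSup
  · exact ((Set.toFinite (Set.range (bsAt S f))).subset (by rintro c ⟨y, -, rfl⟩; exact ⟨y, rfl⟩)).bddAbove
  · exact ⟨x, hx, rfl⟩

open Finset in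
theorem aux_s (k : ℕ) :
    sM (cubeSlice (Fin (2 * k) × Fin (2 * k)) (2 * k * k)) (rub k) ≤ 4 * k := by
  apply csSup_le'
  rintro c ⟨x, hx, rfl⟩
  by_cases hf : rub k x = true
  · have hf' := hf
    simp only [rub, decide_eq_true_eq] at hf
    obtain ⟨j, i, hj⟩ := hf
    apply aux_sAt _ _ _ (univ.map ⟨fun t => (j, t), fun a b h => by simpa using h⟩)
    · simp; omega
    · intro B hB h2
      by_contra! hcon
      apply hB.2
      rw [hf']
      simp only [rub, decide_eq_true_eq]
      refine ⟨j, i, fun t => ?_⟩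
      have : (j, t) ∉ B := hcon _ (mem_map.2 ⟨t, mem_univ _, rfl⟩)
      rw [← hj t]
      simp [flipOn, this]
  · have hf0 := hf
    simp only [rub, decide_eq_true_eq] at hf
    let T : Fin k → Finset (Fin (2 * k)) := fun i =>
      {⟨2 * i.1, by omega⟩, ⟨2 * i.1 + 1, by omega⟩}
    have hT : ∀ i t, t ∈ T i ↔ (t.1 = 2 * i.1 ∨ t.1 = 2 * i.1 + 1) := by
      intro i t; simp [T, Fin.ext_iff]
    have hP : ∀ j : Fin (2 * k), ∃ P : Finset (Fin (2 * k)), P.card ≤ 2 ∧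
        ∀ D : Finset (Fin (2 * k)), ∀ i, symmDiff (univ.filter fun t => x (j, t) = true) D = T i →
      (D ∩ (univ.filter fun t => x (j, t) = true)).card ≤ 1 →
      (D \ (univ.filter fun t => x (j, t) = true)).card ≤ 1 → ∃ a ∈ P, a ∈ D := by
      intro j
      apply aux_comb
      · intro i i' a h h'
        rw [hT] at h h'
        ext; omega
      · intro i
        apply card_pair
        simp [Fin.ext_iff]
      · intro a
        refine ⟨⟨a.1 / 2, by omega⟩, ?_⟩
        rw [hT]; simp only; omega
      · intro i h
        apply hf
        refine ⟨j, i, fun t => ?_⟩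
        rw [← hT, ← h]; simp
    choose P hPc hP using hP
    apply aux_sAt _ _ _ (univ.sigma P |>.map ⟨fun p : (_ : Fin (2 * k)) × Fin (2 * k) => (p.1, p.2),
      by rintro ⟨a, b⟩ ⟨c, d⟩ h; simp at h; simp [h]⟩)
    · rw [card_map, card_sigma]
      calc ∑ j, (P j).card ≤ ∑ j : Fin (2 * k), 2 := sum_le_sum fun j _ => hPc j
        _ ≤ 4 * k := by simp; omega
    · intro B hB h2
      obtain ⟨hc1, hc2⟩ := aux_flip _ x B hx hB.1 h2
      have hB1 : rub k (flipOn x B) = true := by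
        have := hB.2
        simp only [Bool.not_eq_true] at hf0
        rw [hf0] at this
        simpa using this
      simp only [rub, decide_eq_true_eq] at hB1
      obtain ⟨j, i, hj⟩ := hB1
      have inj : ∀ s : Finset (Fin (2 * k)), Set.InjOn (fun t => (j, t)) (s : Set (Fin (2 * k))) := by
        intro s a _ b _ h
        simpa using h
      obtain ⟨a, ha, haD⟩ := hP j (univ.filter fun t => (j, t) ∈ B) i (by
          ext t
          rw [hT, ← hj t]
          simp only [flipOn, mem_filter, mem_univ, true_and, mem_symmDiff]
          by_cases h : (j, t) ∈ B <;> simp [h]) (by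
          rw [← hc1]
          apply card_le_card_of_injOn (fun t => (j, t)) _ (inj _)
          intro t ht
          simpa using ht) (by
          rw [← hc2]
          apply card_le_card_of_injOn (fun t => (j, t)) _ (inj _)
          intro t ht
          simpa using ht)
      refine ⟨(j, a), ?_, by simpa using haD⟩
      exact mem_map.2 ⟨⟨j, a⟩, mem_sigma.2 ⟨mem_univ _, ha⟩, rfl⟩

open Finset in
theorem aux_b1 : 1 ≤ bsM (cubeSlice (Fin (2 * 1) × Fin (2 * 1)) (2 * 1 * 1)) (rub 1) := by
  have := aux_bs (cubeSlice (Fin (2 * 1) × Fin (2 * 1)) (2 * 1 * 1)) (rub 1)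
    (fun p => decide (p.1 = 0)) (by show hamWeight _ = _; decide) {{(0, 0), (1, 0)}}
    (by
      intro B hB
      rw [mem_singleton] at hB
      subst hB
      refine ⟨by show hamWeight _ = _; decide, by decide⟩)
    (by simp)
  simpa using this

open Finset in
theorem aux_b (k : ℕ) (hk : 2 ≤ k) :
    k * k ≤ bsM (cubeSlice (Fin (2 * k) × Fin (2 * k)) (2 * k * k)) (rub k) := by
  let x : Fin (2 * k) × Fin (2 * k) → Bool := fun p => decide (k ≤ p.1.1)
  let BB : Fin k × Fin k → Finset (Fin (2 * k) × Fin (2 * k)) := fun p =>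
    univ.filter fun q => (q.1.1 = p.1.1 ∨ q.1.1 = p.1.1 + k) ∧ (q.2.1 = 2 * p.2.1 ∨ q.2.1 = 2 * p.2.1 + 1)
  have hBB : ∀ p q, q ∈ BB p ↔ ((q.1.1 = p.1.1 ∨ q.1.1 = p.1.1 + k) ∧ (q.2.1 = 2 * p.2.1 ∨ q.2.1 = 2 * p.2.1 + 1)) := by
    intro p q; simp [BB]
  have hdisj : ∀ p p', ∀ q, q ∈ BB p → q ∈ BB p' → p = p' := by
    rintro ⟨a, b⟩ ⟨c, d⟩ q h h'
    rw [hBB] at h h'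
    simp only at h h'
    ext <;> simp only <;> omega
  have hinj : Function.Injective BB := by
    intro p p' h
    have : ((⟨p.1.1, by omega⟩, ⟨2 * p.2.1, by omega⟩) : Fin (2 * k) × Fin (2 * k)) ∈ BB p := by
      rw [hBB]; simp
    exact hdisj p p' _ this (h ▸ this)
  -- weight: a function y with y (j,t) ≠ y (j+k,t) is balanced
  have hbal : ∀ y : Fin (2 * k) × Fin (2 * k) → Bool,
      (∀ a b : Fin (2 * k), ∀ t, b.1 = a.1 + k → y (b, t) = !(y (a, t))) →
      y ∈ cubeSlice (Fin (2 * k) × Fin (2 * k)) (2 * k * k) := by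
    intro y hy
    show hamWeight y = _
    have hh : (univ.filter fun i => y i = true).card = (univ.filter fun i => ¬ y i = true).card := by
      let g : Fin (2 * k) × Fin (2 * k) → Fin (2 * k) × Fin (2 * k) := fun p =>
        (⟨if p.1.1 < k then p.1.1 + k else p.1.1 - k, by split <;> omega⟩, p.2)
      have hg : ∀ p, y (g p) = !(y p) := by
        rintro ⟨a, t⟩
        by_cases h : a.1 < k
        · exact hy _ _ _ (by simp [h])
        · have := hy (g (a, t)).1 a t (by simp [g, h]; omega)
          rw [this, Bool.not_not]
      have hgg : ∀ p, g (g p) = p := by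
        rintro ⟨a, t⟩
        ext
        · simp only [g]; split_ifs <;> omega
        · rfl
      apply card_bij' (fun p _ => g p) (fun p _ => g p)
      · intro p hp; simpa [hg] using hp
      · intro p hp; simpa [hg] using hp
      · intro p _; exact hgg p
      · intro p _; exact hgg p
    have hs := card_filter_add_card_filter_not (s := (univ : Finset (Fin (2 * k) × Fin (2 * k)))) (fun i => y i = true)
    simp only [card_univ, Fintype.card_prod, Fintype.card_fin] at hs
    unfold hamWeight
    have e : 2 * k * (2 * k) = 2 * (2 * k * k) := by ring
    omega
  have hx0 : rub k x = false := by
    simp only [rub, decide_eq_false_iff_not]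
    rintro ⟨j, i, h⟩
    by_cases hj : k ≤ j.1
    · have h1 := h ⟨0, by omega⟩
      have h2 := h ⟨2, by omega⟩
      simp [x, hj] at h1 h2
      omega
    · have h1 := h ⟨2 * i.1, by omega⟩
      simp [x, hj] at h1
  have := aux_bs (cubeSlice (Fin (2 * k) × Fin (2 * k)) (2 * k * k)) (rub k) x
    (hbal x (by
      intro a b t h
      simp only [x]
      have : k ≤ b.1 := by omega
      have h' : ¬ k ≤ a.1 := by omega
      simp [this, h']))
    (univ.map ⟨BB, hinj⟩) ?_ ?_
  · simpa using this
  · intro B hB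
    simp only [mem_map, mem_univ, true_and, Function.Embedding.coeFn_mk] at hB
    obtain ⟨p, rfl⟩ := hB
    constructor
    · apply hbal
      intro a b t h
      have e : (b, t) ∈ BB p ↔ (a, t) ∈ BB p := by
        rw [hBB, hBB]; simp only; omega
      have h1 : k ≤ b.1 := by omega
      have h' : ¬ k ≤ a.1 := by omega
      simp only [flipOn, e, x, h1, h']
      split_ifs <;> rfl
    · rw [hx0]
      have : rub k (flipOn x (BB p)) = true := by
        simp only [rub, decide_eq_true_eq]
        refine ⟨⟨p.1.1, by omega⟩, p.2, fun t => ?_⟩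
        have h' : ¬ k ≤ p.1.1 := by omega
        simp [flipOn, hBB, x]
        tauto
      rw [this]; simp
  · intro A hA B hB hne
    simp only [coe_map, Function.Embedding.coeFn_mk, coe_univ, Set.image_univ, Set.mem_range] at hA hB
    obtain ⟨p, rfl⟩ := hA
    obtain ⟨q, rfl⟩ := hB
    rw [disjoint_left]
    intro a ha hb
    exact hne (by rw [hdisj p q a ha hb])

/-- The restriction of the Rubinstein function to the balanced slice of `{0,1}^n`
(`n = (2k)²`) satisfies `bs(f) ≥ s(f)²/16`; specifically `bs(f) ≥ n/4` and
`s(f) ≤ 2√n`. -/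
theorem stmt19 (k : ℕ) (hk : 1 ≤ k) :
    ((sM (cubeSlice (Fin (2 * k) × Fin (2 * k)) (2 * k * k)) (rub k) : ℝ) ^ 2 / 16 ≤
        (bsM (cubeSlice (Fin (2 * k) × Fin (2 * k)) (2 * k * k)) (rub k) : ℝ)) ∧
      (2 * k) ^ 2 / 4 ≤ bsM (cubeSlice (Fin (2 * k) × Fin (2 * k)) (2 * k * k)) (rub k) ∧
      (sM (cubeSlice (Fin (2 * k) × Fin (2 * k)) (2 * k * k)) (rub k) : ℝ) ≤
        2 * Real.sqrt (((2 * k) ^ 2 : ℕ) : ℝ) := by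
  have hs := aux_s k
  have hb : k * k ≤ bsM (cubeSlice (Fin (2 * k) × Fin (2 * k)) (2 * k * k)) (rub k) := by
    rcases Nat.lt_or_ge 1 k with h | h
    · exact aux_b k h
    · obtain rfl : k = 1 := by omega
      exact aux_b1
  have hs' : (sM (cubeSlice (Fin (2 * k) × Fin (2 * k)) (2 * k * k)) (rub k) : ℝ) ≤ 4 * k := by
    exact_mod_cast hs
  have hb' : (k : ℝ) * k ≤ (bsM (cubeSlice (Fin (2 * k) × Fin (2 * k)) (2 * k * k)) (rub k) : ℝ) := by
    exact_mod_cast hb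
  refine ⟨?_, ?_, ?_⟩
  · refine le_trans ?_ hb'
    have h0 : (0 : ℝ) ≤ (sM (cubeSlice (Fin (2 * k) × Fin (2 * k)) (2 * k * k)) (rub k) : ℝ) :=
      Nat.cast_nonneg _
    have := pow_le_pow_left₀ h0 hs' 2
    nlinarith
  · refine le_trans (le_of_eq ?_) hb
    have : (2 * k) ^ 2 = 4 * (k * k) := by ring
    omega
  · refine hs'.trans (le_of_eq ?_)
    push_cast
    rw [Real.sqrt_sq (by positivity)]
    ring
end
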